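/- arXiv:0907.2369 — 2 statements merged into one kernel-verified Lean document; each statement's English description precedes it below -/
import Mathlib

section
/- The map Ψ⁰_{2k} on 2k × 2k complex matrices, defined on the 2×2 block decomposition X = [[X₁₁, X₁₂],[X₂₁, X₂₂]] (with k×k blocks) by Ψ⁰_{2k}(X) = (1/k)·[[𝕀_k·Tr(X₂₂), −(X₁₂ + R_k(X₂₁))],[−(X₂₁ + R_k(X₁₂)), 𝕀_k·Tr(X₁₁)]], where R_k(Y) = 𝕀_k·Tr(Y) − Y, is a positive map: it sends every positive semidefinite 2k×2k matrix to a positive semidefinite matrix. -/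
open Matrix ComplexOrder Kronecker

noncomputable section

/-- The reduction map `R_k(Y) = Tr(Y)·𝕀_k − Y` on `k × k` complex matrices. -/
def Rmap (k : ℕ) (Y : Matrix (Fin k) (Fin k) ℂ) : Matrix (Fin k) (Fin k) ℂ :=
  Y.trace • (1 : Matrix (Fin k) (Fin k) ℂ) - Y

/-- The map `Ψ⁰_{2k}` on `2k × 2k` complex matrices (indexed by `Fin k ⊕ Fin k`),
defined blockwise via the reduction map `R_k`. -/
def Psi (k : ℕ) (X : Matrix (Fin k ⊕ Fin k) (Fin k ⊕ Fin k) ℂ) :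
    Matrix (Fin k ⊕ Fin k) (Fin k ⊕ Fin k) ℂ :=
  ((k : ℂ))⁻¹ • Matrix.fromBlocks
    ((X.toBlocks₂₂.trace) • (1 : Matrix (Fin k) (Fin k) ℂ))
    (-(X.toBlocks₁₂ + Rmap k X.toBlocks₂₁))
    (-(X.toBlocks₂₁ + Rmap k X.toBlocks₁₂))
    ((X.toBlocks₁₁.trace) • (1 : Matrix (Fin k) (Fin k) ℂ))

/-!
By the spectral theorem it suffices to treat a rank-one matrix `X = ψ ψᴴ` with `ψ = (a, b)`.
Up to the factor `1/k` its image is `[[‖b‖² 𝕀, -T], [-Tᴴ, ‖a‖² 𝕀]]`, where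
`T y = ⟪b, y⟫ a - ⟪a, y⟫ b + ⟪a, b⟫ y`. The defect `(‖a‖ ‖b‖ ‖y‖)² - ‖T y‖²` is the Gram
determinant of `a, b, y`, so `‖T‖ ≤ ‖a‖ ‖b‖`, and the block matrix is positive semidefinite by
Cauchy–Schwarz and AM-GM.
-/

section Gram

variable {𝕜 E : Type*} [RCLike 𝕜] [SeminormedAddCommGroup E] [InnerProductSpace 𝕜 E]

theorem det_gram_vec_three (a b c : E) :
    (gram 𝕜 ![a, b, c]).det = (((‖a‖ * ‖b‖ * ‖c‖) ^ 2
      - ‖inner 𝕜 b c • a - inner 𝕜 a c • b + inner 𝕜 a b • c‖ ^ 2 : ℝ) : 𝕜) := by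
  have norm_sq (v : E) : ((‖v‖ : ℝ) : 𝕜) ^ 2 = inner 𝕜 v v :=
    (inner_self_eq_norm_sq_to_K v).symm
  simp only [det_fin_three, gram_apply, cons_val]
  push_cast
  simp only [mul_pow, norm_sq, inner_add_left, inner_add_right, inner_sub_left, inner_sub_right,
    inner_smul_left, inner_smul_right, inner_conj_symm]
  ring

theorem norm_inner_smul_sub_add_le (a b c : E) :
    ‖inner 𝕜 b c • a - inner 𝕜 a c • b + inner 𝕜 a b • c‖ ≤ ‖a‖ * ‖b‖ * ‖c‖ := by
  have h_det : 0 ≤ (gram 𝕜 ![a, b, c]).det := (posSemidef_gram 𝕜 ![a, b, c]).det_nonneg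
  rw [det_gram_vec_three, RCLike.ofReal_nonneg, sub_nonneg] at h_det
  exact le_of_sq_le_sq h_det (by positivity)

end Gram

theorem posSemidef_map_of_forall_vecMulVec {𝕜 m n F : Type*} [RCLike 𝕜] [Finite m]
    [FunLike F (Matrix m m 𝕜) (Matrix n n 𝕜)] [AddMonoidHomClass F (Matrix m m 𝕜) (Matrix n n 𝕜)]
    {f : F} (hf : ∀ v : m → 𝕜, (f (vecMulVec v (star v))).PosSemidef)
    {X : Matrix m m 𝕜} (hX : X.PosSemidef) : (f X).PosSemidef := by
  have := Fintype.ofFinite m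
  obtain ⟨r, v, rfl⟩ := posSemidef_iff_eq_sum_vecMulVec.mp hX
  rw [map_sum]
  exact posSemidef_sum _ fun i _ => hf (v i)

theorem ofReal_norm_toLp_sq {𝕜 n : Type*} [RCLike 𝕜] [Fintype n] (v : n → 𝕜) :
    ((‖WithLp.toLp 2 v‖ ^ 2 : ℝ) : 𝕜) = star v ⬝ᵥ v := by
  rw [RCLike.ofReal_pow, ← inner_self_eq_norm_sq_to_K, EuclideanSpace.inner_toLp_toLp,
    dotProduct_comm]

section BlockMatrix

open scoped Matrix.Norms.L2Operator

variable {𝕜 m n : Type*} [RCLike 𝕜] [Fintype m] [Fintype n] [DecidableEq m] [DecidableEq n]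

theorem star_sumElim_dotProduct_fromBlocks_mulVec (r s : ℝ) (B : Matrix m n 𝕜)
    (x : m → 𝕜) (y : n → 𝕜) :
    star (Sum.elim x y) ⬝ᵥ
        fromBlocks (((r ^ 2 : ℝ) : 𝕜) • 1) B Bᴴ (((s ^ 2 : ℝ) : 𝕜) • 1) *ᵥ Sum.elim x y =
      (((r * ‖WithLp.toLp 2 x‖) ^ 2 + (s * ‖WithLp.toLp 2 y‖) ^ 2
        + 2 * RCLike.re (inner 𝕜 (WithLp.toLp 2 x) (WithLp.toLp 2 (B *ᵥ y))) : ℝ) : 𝕜) := by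
  have h_conj : star y ⬝ᵥ Bᴴ *ᵥ x = starRingEnd 𝕜 (star x ⬝ᵥ B *ᵥ y) := by
    rw [starRingEnd_apply, star_dotProduct, star_mulVec, ← dotProduct_mulVec,
      conjTranspose_conjTranspose]
  rw [EuclideanSpace.inner_toLp_toLp, dotProduct_comm (B *ᵥ y), fromBlocks_mulVec,
    Function.star_sumElim, sumElim_dotProduct_sumElim]
  simp only [Sum.elim_comp_inl, Sum.elim_comp_inr, smul_mulVec, one_mulVec, dotProduct_add,
    dotProduct_smul, smul_eq_mul, h_conj, mul_pow, RCLike.ofReal_add, RCLike.ofReal_mul,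
    ofReal_norm_toLp_sq, RCLike.ofReal_ofNat, ← RCLike.add_conj]
  ring

theorem posSemidef_fromBlocks_of_l2_opNorm_le {r s : ℝ} {B : Matrix m n 𝕜} (hB : ‖B‖ ≤ r * s) :
    (fromBlocks (((r ^ 2 : ℝ) : 𝕜) • 1) B Bᴴ (((s ^ 2 : ℝ) : 𝕜) • 1)).PosSemidef := by
  refine .of_dotProduct_mulVec_nonneg (.fromBlocks ?_ rfl ?_) fun w => ?_
  · simp [IsHermitian, conjTranspose_smul]
  · simp [IsHermitian, conjTranspose_smul]
  obtain ⟨x, y, rfl⟩ : ∃ x y, w = Sum.elim x y := ⟨_, _, (Sum.elim_comp_inl_inr w).symm⟩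
  rw [star_sumElim_dotProduct_fromBlocks_mulVec, RCLike.ofReal_nonneg]
  set ξ := WithLp.toLp 2 x
  set η := WithLp.toLp 2 y
  have h_inner : |RCLike.re (inner 𝕜 ξ (WithLp.toLp 2 (B *ᵥ y)))| ≤ (r * ‖ξ‖) * (s * ‖η‖) :=
    calc |RCLike.re (inner 𝕜 ξ (WithLp.toLp 2 (B *ᵥ y)))|
        ≤ ‖ξ‖ * ‖WithLp.toLp 2 (B *ᵥ y)‖ := (RCLike.abs_re_le_norm _).trans (norm_inner_le_norm _ _)
      _ ≤ ‖ξ‖ * (‖B‖ * ‖η‖) := by gcongr; exact l2_opNorm_mulVec B η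
      _ ≤ ‖ξ‖ * ((r * s) * ‖η‖) := by gcongr
      _ = (r * ‖ξ‖) * (s * ‖η‖) := by ring
  linarith [two_mul_le_add_sq (r * ‖ξ‖) (s * ‖η‖), neg_le_of_abs_le h_inner]

end BlockMatrix

section RobertsonMap

variable {R n : Type*} [CommRing R] [Fintype n] [DecidableEq n]

/-- The reduction map `Y ↦ Tr(Y)·𝕀 - Y`, for an arbitrary finite index type and commutative ring;
it is bundled as a linear map, and `Rmap k` is its underlying function over `Fin k` and `ℂ`. -/
def reductionMap : Matrix n n R →ₗ[R] Matrix n n R where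
  toFun Y := Y.trace • 1 - Y
  map_add' Y Z := by rw [trace_add, add_smul]; abel
  map_smul' c Y := by simp only [trace_smul, smul_assoc, smul_sub, RingHom.id_apply]

theorem conjTranspose_reductionMap [StarRing R] (Y : Matrix n n R) :
    (reductionMap Y)ᴴ = reductionMap Yᴴ := by
  simp [reductionMap, conjTranspose_smul, trace_conjTranspose]

/-- The generalized Robertson map on `2 × 2` block matrices, bundled as a linear map. It is `Ψ⁰`
without the normalization `1 / k`, so that it makes sense over any commutative ring. -/
def robertsonMap : Matrix (n ⊕ n) (n ⊕ n) R →ₗ[R] Matrix (n ⊕ n) (n ⊕ n) R where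
  toFun X := fromBlocks (X.toBlocks₂₂.trace • 1) (-(X.toBlocks₁₂ + reductionMap X.toBlocks₂₁))
    (-(X.toBlocks₂₁ + reductionMap X.toBlocks₁₂)) (X.toBlocks₁₁.trace • 1)
  map_add' X Y := by
    have toBlocks_add : (X + Y).toBlocks₁₁ = X.toBlocks₁₁ + Y.toBlocks₁₁ ∧
        (X + Y).toBlocks₁₂ = X.toBlocks₁₂ + Y.toBlocks₁₂ ∧
        (X + Y).toBlocks₂₁ = X.toBlocks₂₁ + Y.toBlocks₂₁ ∧
        (X + Y).toBlocks₂₂ = X.toBlocks₂₂ + Y.toBlocks₂₂ := ⟨rfl, rfl, rfl, rfl⟩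
    simp only [toBlocks_add, trace_add, add_smul, map_add, fromBlocks_add]
    congr 1 <;> abel
  map_smul' c X := by
    have toBlocks_smul : (c • X).toBlocks₁₁ = c • X.toBlocks₁₁ ∧
        (c • X).toBlocks₁₂ = c • X.toBlocks₁₂ ∧ (c • X).toBlocks₂₁ = c • X.toBlocks₂₁ ∧
        (c • X).toBlocks₂₂ = c • X.toBlocks₂₂ := ⟨rfl, rfl, rfl, rfl⟩
    simp only [toBlocks_smul, trace_smul, smul_assoc, map_smul, ← smul_add, ← smul_neg,
      fromBlocks_smul, RingHom.id_apply]

end RobertsonMap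

section Positivity

open scoped Matrix.Norms.L2Operator

variable {𝕜 n : Type*} [RCLike 𝕜] [Fintype n] [DecidableEq n]

theorem toLp_vecMulVec_add_reductionMap_mulVec (a b y : n → 𝕜) :
    WithLp.toLp 2 ((vecMulVec a (star b) + reductionMap (vecMulVec b (star a))) *ᵥ y) =
      inner 𝕜 (WithLp.toLp 2 b) (WithLp.toLp 2 y) • WithLp.toLp 2 a
        - inner 𝕜 (WithLp.toLp 2 a) (WithLp.toLp 2 y) • WithLp.toLp 2 b
        + inner 𝕜 (WithLp.toLp 2 a) (WithLp.toLp 2 b) • WithLp.toLp 2 y := by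
  simp only [reductionMap, LinearMap.coe_mk, AddHom.coe_mk, add_mulVec, sub_mulVec, smul_mulVec,
    one_mulVec, vecMulVec_mulVec, trace_vecMulVec, op_smul_eq_smul,
    EuclideanSpace.inner_toLp_toLp, dotProduct_comm (star _), WithLp.toLp_add, WithLp.toLp_sub,
    WithLp.toLp_smul]
  abel

theorem l2_opNorm_vecMulVec_add_reductionMap_le (a b : n → 𝕜) :
    ‖vecMulVec a (star b) + reductionMap (vecMulVec b (star a))‖ ≤
      ‖WithLp.toLp 2 a‖ * ‖WithLp.toLp 2 b‖ := by
  rw [l2_opNorm_def]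
  refine ContinuousLinearMap.opNorm_le_bound _ (by positivity) fun y => ?_
  exact (congrArg norm (toLp_vecMulVec_add_reductionMap_mulVec a b y.ofLp)).trans_le
    (norm_inner_smul_sub_add_le _ _ _)

theorem robertsonMap_vecMulVec_sumElim (a b : n → 𝕜) :
    robertsonMap (vecMulVec (Sum.elim a b) (star (Sum.elim a b))) =
      fromBlocks (((‖WithLp.toLp 2 b‖ ^ 2 : ℝ) : 𝕜) • 1)
        (-(vecMulVec a (star b) + reductionMap (vecMulVec b (star a))))
        (-(vecMulVec a (star b) + reductionMap (vecMulVec b (star a))))ᴴ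
        (((‖WithLp.toLp 2 a‖ ^ 2 : ℝ) : 𝕜) • 1) := by
  rw [ofReal_norm_toLp_sq, ofReal_norm_toLp_sq, dotProduct_comm (star b), dotProduct_comm (star a),
    ← trace_vecMulVec, ← trace_vecMulVec, conjTranspose_neg, conjTranspose_add,
    conjTranspose_reductionMap, conjTranspose_vecMulVec, conjTranspose_vecMulVec, star_star,
    star_star]
  rfl

theorem stmt2_general {X : Matrix (n ⊕ n) (n ⊕ n) 𝕜} (hX : X.PosSemidef) :
    (robertsonMap X).PosSemidef := by
  refine posSemidef_map_of_forall_vecMulVec (fun ψ => ?_) hX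
  rw [← Sum.elim_comp_inl_inr ψ, robertsonMap_vecMulVec_sumElim]
  apply posSemidef_fromBlocks_of_l2_opNorm_le
  rw [norm_neg, mul_comm]
  exact l2_opNorm_vecMulVec_add_reductionMap_le _ _

end Positivity

theorem stmt2 (k : ℕ) (hk : 2 ≤ k)
    (X : Matrix (Fin k ⊕ Fin k) (Fin k ⊕ Fin k) ℂ) (hX : X.PosSemidef) :
    (Psi k X).PosSemidef :=
  (stmt2_general hX).smul (by positivity)
end
end

section
/- Define φ₁ = e₁⊗e₁, φ₂ = e₁⊗e_{k+1}, φ₃ = e_k⊗e₁, φ₄ = e_k⊗e_{2k}, φ₅ = e_{k+1}⊗e₁, φ₆ = e_{k+1}⊗e_{k+1}, φ₇ = e_{k+1}⊗e_{2k} in ℂ^{2k} ⊗ ℂ^{2k}, and D_{2k} = (1/7)(|φ₁+φ₆⟩⟨φ₁+φ₆| + |φ₅−φ₄⟩⟨φ₅−φ₄| + |φ₂⟩⟨φ₂| + |φ₃⟩⟨φ₃| + |φ₇⟩⟨φ₇|). Then the partial transpose satisfies D_{2k}^Γ = (1/7)(|φ₂+φ₅⟩⟨φ₂+φ₅| + |φ₃−φ₇⟩⟨φ₃−φ₇|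 + |φ₁⟩⟨φ₁| + |φ₄⟩⟨φ₄| + |φ₆⟩⟨φ₆|). In particular both D_{2k} and D_{2k}^Γ are positive semidefinite and have Schmidt number at most 2. -/
open Matrix ComplexOrder Kronecker

noncomputable section

/-- The standard basis vector `e_i` of `ℂ^{2k}`. -/
def uvec (k : ℕ) (i : Fin k ⊕ Fin k) : (Fin k ⊕ Fin k) → ℂ := Pi.single i 1

/-- Elementary tensor `a ⊗ b` of two vectors in `ℂ^{2k}`. -/
def tensv (k : ℕ) (a b : (Fin k ⊕ Fin k) → ℂ) : (Fin k ⊕ Fin k) × (Fin k ⊕ Fin k) → ℂ :=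
  fun p => a p.1 * b p.2

/-- The rank-one projector `|v⟩⟨v|` as a matrix. -/
def projv (k : ℕ) (v : (Fin k ⊕ Fin k) × (Fin k ⊕ Fin k) → ℂ) :
    Matrix ((Fin k ⊕ Fin k) × (Fin k ⊕ Fin k)) ((Fin k ⊕ Fin k) × (Fin k ⊕ Fin k)) ℂ :=
  vecMulVec v (star v)

/-- Partial transposition (on the second tensor factor). -/
def ptI (k : ℕ)
    (M : Matrix ((Fin k ⊕ Fin k) × (Fin k ⊕ Fin k)) ((Fin k ⊕ Fin k) × (Fin k ⊕ Fin k)) ℂ) :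
    Matrix ((Fin k ⊕ Fin k) × (Fin k ⊕ Fin k)) ((Fin k ⊕ Fin k) × (Fin k ⊕ Fin k)) ℂ :=
  Matrix.of fun p q => M (p.1, q.2) (q.1, p.2)

/-- `σ` has Schmidt number at most `2`: it is a sum of (unnormalized) rank-one
projectors onto vectors of Schmidt rank at most `2`. -/
def SchmidtNumberLE2 (k : ℕ)
    (σ : Matrix ((Fin k ⊕ Fin k) × (Fin k ⊕ Fin k)) ((Fin k ⊕ Fin k) × (Fin k ⊕ Fin k)) ℂ) :
    Prop :=
  ∃ (n : ℕ) (v : Fin n → ((Fin k ⊕ Fin k) × (Fin k ⊕ Fin k) → ℂ)),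
    (∀ m, ∃ a₁ b₁ a₂ b₂ : (Fin k ⊕ Fin k) → ℂ, v m = tensv k a₁ b₁ + tensv k a₂ b₂) ∧
    σ = ∑ m, projv k (v m)

/- Partial transposition sends `|a ⊗ b⟩⟨c ⊗ d|` to `|a ⊗ d̄⟩⟨c ⊗ b̄|`. On `|a ⊗ b + c ⊗ d⟩⟨a ⊗ b + c ⊗ d|`
it therefore turns the two cross terms into those of the exchanged vector `a ⊗ d̄ + c ⊗ b̄`, so the
result is the projector onto the exchanged vector, up to projectors onto product vectors. In `D` the
pairs `(φ₁, φ₆)` and `(φ₅, φ₄)` are exchanged into `(φ₂, φ₅)` and `(φ₇, φ₃)`, and the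
product-vector corrections combine with `φ₂`, `φ₃`, `φ₇` to leave exactly `φ₁`, `φ₄`, `φ₆`. -/

section

variable {k : ℕ}

theorem star_uvec (i : Fin k ⊕ Fin k) : star (uvec k i) = uvec k i := by
  rw [uvec, ← Pi.single_star, star_one]

theorem tensv_zero_left (b : Fin k ⊕ Fin k → ℂ) : tensv k 0 b = 0 :=
  funext fun _ => zero_mul _

theorem tensv_neg_left (a b : Fin k ⊕ Fin k → ℂ) : tensv k (-a) b = -tensv k a b :=
  funext fun _ => neg_mul _ _

theorem tensv_smul_left (s : ℂ) (a b : Fin k ⊕ Fin k → ℂ) :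
    tensv k (s • a) b = s • tensv k a b :=
  funext fun _ => mul_assoc _ _ _

theorem projv_add (v w : (Fin k ⊕ Fin k) × (Fin k ⊕ Fin k) → ℂ) :
    projv k (v + w) =
      projv k v + projv k w + (vecMulVec v (star w) + vecMulVec w (star v)) := by
  simp only [projv, star_add, add_vecMulVec, vecMulVec_add]
  abel

theorem projv_neg (v : (Fin k ⊕ Fin k) × (Fin k ⊕ Fin k) → ℂ) : projv k (-v) = projv k v := by
  rw [projv, projv, star_neg, neg_vecMulVec, vecMulVec_neg, neg_neg]

theorem projv_sub_comm (v w : (Fin k ⊕ Fin k) × (Fin k ⊕ Fin k) → ℂ) :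
    projv k (v - w) = projv k (w - v) := by
  rw [← projv_neg, neg_sub]

theorem projv_smul (s : ℂ) (v : (Fin k ⊕ Fin k) × (Fin k ⊕ Fin k) → ℂ) :
    projv k (s • v) = (star s * s) • projv k v := by
  rw [projv, projv, star_smul, smul_vecMulVec, vecMulVec_smul, smul_smul, mul_comm]

theorem projv_posSemidef (v : (Fin k ⊕ Fin k) × (Fin k ⊕ Fin k) → ℂ) :
    (projv k v).PosSemidef :=
  posSemidef_vecMulVec_self_star v

theorem ptI_add
    (M N : Matrix ((Fin k ⊕ Fin k) × (Fin k ⊕ Fin k)) ((Fin k ⊕ Fin k) × (Fin k ⊕ Fin k)) ℂ) :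
    ptI k (M + N) = ptI k M + ptI k N :=
  rfl

theorem ptI_smul (s : ℂ)
    (M : Matrix ((Fin k ⊕ Fin k) × (Fin k ⊕ Fin k)) ((Fin k ⊕ Fin k) × (Fin k ⊕ Fin k)) ℂ) :
    ptI k (s • M) = s • ptI k M :=
  rfl

theorem ptI_vecMulVec_tensv (a b c d : Fin k ⊕ Fin k → ℂ) :
    ptI k (vecMulVec (tensv k a b) (star (tensv k c d))) =
      vecMulVec (tensv k a (star d)) (star (tensv k c (star b))) := by
  ext p q
  simp only [ptI, of_apply, vecMulVec_apply, Pi.star_apply, tensv, star_mul', star_star]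
  ring

theorem ptI_projv_tensv (a b : Fin k ⊕ Fin k → ℂ) :
    ptI k (projv k (tensv k a b)) = projv k (tensv k a (star b)) :=
  ptI_vecMulVec_tensv a b a b

theorem ptI_projv_tensv_add_tensv (a b c d : Fin k ⊕ Fin k → ℂ) :
    ptI k (projv k (tensv k a b + tensv k c d)) =
      projv k (tensv k a (star d) + tensv k c (star b))
        + projv k (tensv k a (star b)) + projv k (tensv k c (star d))
        - projv k (tensv k a (star d)) - projv k (tensv k c (star b)) := by
  simp only [projv_add, ptI_add, ptI_projv_tensv, ptI_vecMulVec_tensv]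
  abel

theorem ptI_projv_tensv_sub_tensv (a b c d : Fin k ⊕ Fin k → ℂ) :
    ptI k (projv k (tensv k a b - tensv k c d)) =
      projv k (tensv k a (star d) - tensv k c (star b))
        + projv k (tensv k a (star b)) + projv k (tensv k c (star d))
        - projv k (tensv k a (star d)) - projv k (tensv k c (star b)) := by
  simpa only [tensv_neg_left, projv_neg, ← sub_eq_add_neg] using
    ptI_projv_tensv_add_tensv a b (-c) d

namespace SchmidtNumberLE2

variable
  {σ τ : Matrix ((Fin k ⊕ Fin k) × (Fin k ⊕ Fin k)) ((Fin k ⊕ Fin k) × (Fin k ⊕ Fin k)) ℂ}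

theorem posSemidef (hσ : SchmidtNumberLE2 k σ) : σ.PosSemidef := by
  obtain ⟨n, v, -, rfl⟩ := hσ
  exact posSemidef_sum _ fun m _ => projv_posSemidef (v m)

theorem add (hσ : SchmidtNumberLE2 k σ) (hτ : SchmidtNumberLE2 k τ) :
    SchmidtNumberLE2 k (σ + τ) := by
  obtain ⟨m, v, hv, rfl⟩ := hσ
  obtain ⟨n, w, hw, rfl⟩ := hτ
  refine ⟨m + n, Fin.append v w, fun l => ?_, ?_⟩
  · induction l using Fin.addCases with
    | left i => simpa only [Fin.append_left] using hv i
    | right j => simpa only [Fin.append_right] using hw j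
  · simp only [Fin.sum_univ_add, Fin.append_left, Fin.append_right]

theorem smul {c : ℂ} (hc : 0 ≤ c) (hσ : SchmidtNumberLE2 k σ) : SchmidtNumberLE2 k (c • σ) := by
  obtain ⟨s, rfl⟩ := CStarAlgebra.nonneg_iff_eq_star_mul_self.mp hc
  obtain ⟨n, v, hv, rfl⟩ := hσ
  refine ⟨n, fun m => s • v m, fun m => ?_, by simp only [projv_smul, Finset.smul_sum]⟩
  obtain ⟨a₁, b₁, a₂, b₂, h⟩ := hv m
  exact ⟨s • a₁, b₁, s • a₂, b₂, by simp only [h, smul_add, tensv_smul_left]⟩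

theorem projv_tensv_add_tensv (a b c d : Fin k ⊕ Fin k → ℂ) :
    SchmidtNumberLE2 k (projv k (tensv k a b + tensv k c d)) :=
  ⟨1, fun _ => tensv k a b + tensv k c d, fun _ => ⟨a, b, c, d, rfl⟩,
    (Fin.sum_univ_one fun _ => _).symm⟩

theorem projv_tensv_sub_tensv (a b c d : Fin k ⊕ Fin k → ℂ) :
    SchmidtNumberLE2 k (projv k (tensv k a b - tensv k c d)) := by
  simpa only [tensv_neg_left, ← sub_eq_add_neg] using projv_tensv_add_tensv a b (-c) d

theorem projv_tensv (a b : Fin k ⊕ Fin k → ℂ) : SchmidtNumberLE2 k (projv k (tensv k a b)) := by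
  simpa only [tensv_zero_left, add_zero] using projv_tensv_add_tensv a b 0 0

end SchmidtNumberLE2

/- The vectors `φ₁, …, φ₇` are `x ⊗ u`, `x ⊗ v`, `y ⊗ u`, `y ⊗ w`, `z ⊗ u`, `z ⊗ v`, `z ⊗ w`. -/
theorem stmt15_general {c : ℂ} (hc : 0 ≤ c) (x y z u v w : Fin k ⊕ Fin k → ℂ)
    (D : Matrix ((Fin k ⊕ Fin k) × (Fin k ⊕ Fin k)) ((Fin k ⊕ Fin k) × (Fin k ⊕ Fin k)) ℂ)
    (hD : D = c • (projv k (tensv k x u + tensv k z v) + projv k (tensv k z u - tensv k y w)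
        + projv k (tensv k x v) + projv k (tensv k y u) + projv k (tensv k z w))) :
    ptI k D = c • (projv k (tensv k x (star v) + tensv k z (star u))
        + projv k (tensv k y (star u) - tensv k z (star w))
        + projv k (tensv k x (star u)) + projv k (tensv k y (star w))
        + projv k (tensv k z (star v))) ∧
    D.PosSemidef ∧ (ptI k D).PosSemidef ∧
    SchmidtNumberLE2 k D ∧ SchmidtNumberLE2 k (ptI k D) := by
  have ptI_D : ptI k D = c • (projv k (tensv k x (star v) + tensv k z (star u))
      + projv k (tensv k y (star u) - tensv k z (star w))
      + projv k (tensv k x (star u)) + projv k (tensv k y (star w))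
      + projv k (tensv k z (star v))) := by
    rw [hD, ptI_smul, projv_sub_comm (tensv k y (star u))]
    simp only [ptI_add, ptI_projv_tensv, ptI_projv_tensv_add_tensv, ptI_projv_tensv_sub_tensv]
    congr 1
    abel
  have schmidt (a₁ b₁ a₂ b₂ a₃ b₃ a₄ b₄ a₅ b₅ a₆ b₆ a₇ b₇ : Fin k ⊕ Fin k → ℂ) :
      SchmidtNumberLE2 k (c • (projv k (tensv k a₁ b₁ + tensv k a₂ b₂)
        + projv k (tensv k a₃ b₃ - tensv k a₄ b₄)
        + projv k (tensv k a₅ b₅) + projv k (tensv k a₆ b₆) + projv k (tensv k a₇ b₇))) :=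
    .smul hc <| .add (.add (.add (.add (.projv_tensv_add_tensv ..) (.projv_tensv_sub_tensv ..))
      (.projv_tensv ..)) (.projv_tensv ..)) (.projv_tensv ..)
  have schmidt_D : SchmidtNumberLE2 k D := hD ▸ schmidt ..
  have schmidt_ptI_D : SchmidtNumberLE2 k (ptI k D) := ptI_D ▸ schmidt ..
  exact ⟨ptI_D, schmidt_D.posSemidef, schmidt_ptI_D.posSemidef, schmidt_D, schmidt_ptI_D⟩

end

theorem stmt15 (k : ℕ) (hk : 2 ≤ k)
    (φ₁ φ₂ φ₃ φ₄ φ₅ φ₆ φ₇ : (Fin k ⊕ Fin k) × (Fin k ⊕ Fin k) → ℂ)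
    (h₁ : φ₁ = tensv k (uvec k (Sum.inl ⟨0, by omega⟩)) (uvec k (Sum.inl ⟨0, by omega⟩)))
    (h₂ : φ₂ = tensv k (uvec k (Sum.inl ⟨0, by omega⟩)) (uvec k (Sum.inr ⟨0, by omega⟩)))
    (h₃ : φ₃ = tensv k (uvec k (Sum.inl ⟨k - 1, by omega⟩)) (uvec k (Sum.inl ⟨0, by omega⟩)))
    (h₄ : φ₄ = tensv k (uvec k (Sum.inl ⟨k - 1, by omega⟩)) (uvec k (Sum.inr ⟨k - 1, by omega⟩)))
    (h₅ : φ₅ = tensv k (uvec k (Sum.inr ⟨0, by omega⟩)) (uvec k (Sum.inl ⟨0, by omega⟩)))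
    (h₆ : φ₆ = tensv k (uvec k (Sum.inr ⟨0, by omega⟩)) (uvec k (Sum.inr ⟨0, by omega⟩)))
    (h₇ : φ₇ = tensv k (uvec k (Sum.inr ⟨0, by omega⟩)) (uvec k (Sum.inr ⟨k - 1, by omega⟩)))
    (D : Matrix ((Fin k ⊕ Fin k) × (Fin k ⊕ Fin k)) ((Fin k ⊕ Fin k) × (Fin k ⊕ Fin k)) ℂ)
    (hD : D = (7 : ℂ)⁻¹ • (projv k (φ₁ + φ₆) + projv k (φ₅ - φ₄)
        + projv k φ₂ + projv k φ₃ + projv k φ₇)) :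
    ptI k D = (7 : ℂ)⁻¹ • (projv k (φ₂ + φ₅) + projv k (φ₃ - φ₇)
        + projv k φ₁ + projv k φ₄ + projv k φ₆) ∧
    D.PosSemidef ∧ (ptI k D).PosSemidef ∧
    SchmidtNumberLE2 k D ∧ SchmidtNumberLE2 k (ptI k D) := by
  subst h₁ h₂ h₃ h₄ h₅ h₆ h₇
  simpa only [star_uvec] using stmt15_general (by positivity) _ _ _ _ _ _ D hD
end
end
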